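/- Let $h, M$ be positive integers with $4 \mid h$, $h \ge 4$, and $M \ge h$, let $x, y \in \{0,1\}^M$ satisfy the promise $\sum_{i} x_i y_i \le 1$, and let $H_{x,y}$ be the gadget graph defined as follows: on disjoint vertex sets $A = \{a_i\}_{i \in \mathbb{Z}_M}$, $B = \{b_i\}_{i \in \mathbb{Z}_M}$, $C = \{c_i\}_{i \in \mathbb{Z}_M}$, $D = \{d_i\}_{i \in \mathbb{Z}_M}$, $E = \{e_i\}_{i \in \mathbb{Z}_M}$ (indices modulo $M$), with edges for each $i$: if $x_i = 1$, the edges $\{a_i, b_{i+j}\}$ for $0 \le j \le \tfrac{3h}{4}-1$ and $\{d_i, b_{i+j}\}$ for $\tfrac{3h}{4} \le j \le h-1$; if $x_i = 0$, the edges $\{a_i, b_{i+j}\}$ for $0 \le j \le \tfrac{h}{4}-1$ and $\{d_i, b_{i+j}\}$ for $\tfrac{h}{4} \le j \le h-1$; and symmetrically with $y$, $C$, $E$ in place of $x$, $B$, $D$; and no other edges. Then the h-index of $H_{x,y}$ equals exactly $h$, and the ccdh satisfies $C_{H_{x,y}}\big(\tfrac{3h}{2}\big) = \sum_i x_i y_i$;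 in particular $C_{H_{x,y}}(\tfrac{3h}{2}) = 0$ if the supports of $x$ and $y$ are disjoint, and $C_{H_{x,y}}(\tfrac{3h}{2}) = 1$ if they intersect in exactly one index. -/

import Mathlib

/-- The complementary cumulative degree histogram (ccdh) of a graph:
`C(d) = |{v ∈ V : deg(v) ≥ d}|`. -/
noncomputable def ccdh {V : Type*} [Fintype V] (G : SimpleGraph V) [DecidableRel G.Adj]
    (d : ℕ) : ℕ :=
  {v : V | d ≤ G.degree v}.ncard

/-- The h-index of a graph: the largest `d ∈ [n]` with `C(d) ≥ d` (and `0` if none). -/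
noncomputable def hIndex {V : Type*} [Fintype V] (G : SimpleGraph V) [DecidableRel G.Adj] : ℕ :=
  ((Finset.Icc 1 (Fintype.card V)).filter fun d => d ≤ ccdh G d).sup id

/-- The underlying (asymmetric) edge relation of the h-index-sensitive gadget graph
`H_{x,y}`.  The vertex set consists of five blocks `A, B, C, D, E`, each a copy of
`ZMod M`, encoded as `Fin 5 × ZMod M` with `aᵢ = (0, i)`, `bᵢ = (1, i)`, `cᵢ = (2, i)`,
`dᵢ = (3, i)`, `eᵢ = (4, i)`.  For each `i` (indices mod `M`): if `xᵢ = 1` there are the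
edges `{aᵢ, b_{i+j}}` for `0 ≤ j ≤ 3h/4 - 1` and `{dᵢ, b_{i+j}}` for
`3h/4 ≤ j ≤ h - 1`; if `xᵢ = 0` there are the edges `{aᵢ, b_{i+j}}` for
`0 ≤ j ≤ h/4 - 1` and `{dᵢ, b_{i+j}}` for `h/4 ≤ j ≤ h - 1`; and symmetrically with
`y`, `C`, `E` in place of `x`, `B`, `D`. -/
def hGadgetRel (h M : ℕ) (x y : ZMod M → ℕ) :
    Fin 5 × ZMod M → Fin 5 × ZMod M → Prop := fun u w =>
  ∃ i : ZMod M, ∃ j : ℕ, j < h ∧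
    ((u = (0, i) ∧ w = (1, i + (j : ZMod M)) ∧
        ((x i = 1 ∧ j < 3 * h / 4) ∨ (x i = 0 ∧ j < h / 4))) ∨
     (u = (3, i) ∧ w = (1, i + (j : ZMod M)) ∧
        ((x i = 1 ∧ 3 * h / 4 ≤ j) ∨ (x i = 0 ∧ h / 4 ≤ j))) ∨
     (u = (0, i) ∧ w = (2, i + (j : ZMod M)) ∧
        ((y i = 1 ∧ j < 3 * h / 4) ∨ (y i = 0 ∧ j < h / 4))) ∨
     (u = (4, i) ∧ w = (2, i + (j : ZMod M)) ∧
        ((y i = 1 ∧ 3 * h / 4 ≤ j) ∨ (y i = 0 ∧ h / 4 ≤ j))))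

/-- The h-index-sensitive gadget graph `H_{x,y}` used in the reduction from promise
set-disjointness establishing the `Ω(m/h)` lower bound. -/
def hGadget (h M : ℕ) (x y : ZMod M → ℕ) : SimpleGraph (Fin 5 × ZMod M) :=
  SimpleGraph.fromRel (hGadgetRel h M x y)

noncomputable instance (h M : ℕ) (x y : ZMod M → ℕ) :
    DecidableRel (hGadget h M x y).Adj :=
  Classical.decRel _

/-!
Every `bₖ` and `cₖ` has degree exactly `h`, and every `dᵢ` and `eᵢ` has degree at most `h`. The
degree of `aᵢ` is `t (xᵢ) + t (yᵢ)` with `t 0 = ⌊h / 4⌋` and `t 1 = ⌊3h / 4⌋`, so it can exceed `h`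
only when `xᵢ = yᵢ = 1`, and then it is `2⌊3h / 4⌋`, which is `3h / 2` when `4 ∣ h`. Hence above `h`
the ccdh is the step function that equals `∑ᵢ xᵢyᵢ` up to `2⌊3h / 4⌋` and vanishes afterwards, and
the h-index is read off from it.
-/

section HIndex

variable {V : Type*} [Fintype V] (G : SimpleGraph V) [DecidableRel G.Adj]

lemma ccdh_le_card (d : ℕ) : ccdh G d ≤ Fintype.card V :=
  (Set.ncard_le_card _).trans_eq Nat.card_eq_fintype_card

variable {G}

lemma le_hIndex {d : ℕ} (hd : d ≤ ccdh G d) : d ≤ hIndex G := by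
  rcases d.eq_zero_or_pos with rfl | hpos
  · exact Nat.zero_le _
  · exact Finset.le_sup (f := id) <| Finset.mem_filter.2
      ⟨Finset.mem_Icc.2 ⟨hpos, hd.trans (ccdh_le_card G d)⟩, hd⟩

lemma hIndex_le {n : ℕ} (hn : ∀ d, n < d → ccdh G d < d) : hIndex G ≤ n :=
  Finset.sup_le fun d hd => le_of_not_gt fun hlt =>
    (hn d hlt).not_ge (Finset.mem_filter.1 hd).2

end HIndex

lemma degree_eq_card_of_injOn {V ι : Type*} {G : SimpleGraph V} {v : V}
    [Fintype (G.neighborSet v)] {s : Finset ι} {f : ι → V} (hf : Set.InjOn f s)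
    (hadj : ∀ w, G.Adj v w ↔ ∃ j ∈ s, f j = w) : G.degree v = s.card := by
  classical
  have himage : G.neighborFinset v = s.image f := by
    ext w
    rw [SimpleGraph.mem_neighborFinset, hadj, Finset.mem_image]
  rw [← SimpleGraph.card_neighborFinset_eq_degree, himage, Finset.card_image_of_injOn hf]

section CharP

variable {R : Type*} [AddGroupWithOne R] {p : ℕ} [CharP R p] {s : Set ℕ}

lemma injOn_add_natCast (a : R) (hs : ∀ j ∈ s, j < p) :
    Set.InjOn (fun j : ℕ => a + (j : R)) s :=
  (add_right_injective a).comp_injOn ((CharP.natCast_injOn_Iio R p).mono hs)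

lemma injOn_sub_natCast (a : R) (hs : ∀ j ∈ s, j < p) :
    Set.InjOn (fun j : ℕ => a - (j : R)) s :=
  sub_right_injective.comp_injOn ((CharP.natCast_injOn_Iio R p).mono hs)

end CharP

lemma ncard_setOf_eq_one_eq_sum {ι : Type*} [Fintype ι] {f : ι → ℕ} (hf : ∀ i, f i ≤ 1) :
    {i | f i = 1}.ncard = ∑ i, f i := by
  have hindicator (i : ι) : f i = if f i = 1 then 1 else 0 := by
    have hle : f i ≤ 1 := hf i
    split_ifs <;> omega
  rw [Finset.sum_congr rfl fun i _ => hindicator i, ← Finset.card_filter,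
    ← Set.ncard_coe_finset, Finset.coe_filter_univ]

/-- The threshold `t` of the gadget: for an input bit `n`, the offsets `j < t` carry the edges
from `aᵢ` and the offsets `t ≤ j < h` carry those from `dᵢ` (or `eᵢ`). -/
def hGadgetSplit (h n : ℕ) : ℕ :=
  if n = 1 then 3 * h / 4 else h / 4

section Split

variable {h m n j d : ℕ}

lemma hGadgetSplit_le : hGadgetSplit h n ≤ h := by
  unfold hGadgetSplit
  split_ifs <;> omega

lemma lt_hGadgetSplit_iff (hn : n ≤ 1) :
    j < hGadgetSplit h n ↔ (n = 1 ∧ j < 3 * h / 4) ∨ (n = 0 ∧ j < h / 4) := by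
  interval_cases n <;> simp [hGadgetSplit]

lemma hGadgetSplit_le_iff (hn : n ≤ 1) :
    hGadgetSplit h n ≤ j ↔ (n = 1 ∧ 3 * h / 4 ≤ j) ∨ (n = 0 ∧ h / 4 ≤ j) := by
  interval_cases n <;> simp [hGadgetSplit]

lemma le_hGadgetSplit_add_iff (hm : m ≤ 1) (hn : n ≤ 1) (hd : h < d) :
    d ≤ hGadgetSplit h m + hGadgetSplit h n ↔ d ≤ 2 * (3 * h / 4) ∧ m * n = 1 := by
  interval_cases m <;> interval_cases n <;> simp [hGadgetSplit] <;> omega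

end Split

section Adjacency

variable {h M : ℕ} {x y : ZMod M → ℕ}

lemma hGadget_adj_iff {u w : Fin 5 × ZMod M} :
    (hGadget h M x y).Adj u w ↔ hGadgetRel h M x y u w ∨ hGadgetRel h M x y w u := by
  rw [hGadget, SimpleGraph.fromRel_adj, and_iff_right_iff_imp]
  rintro (⟨i, j, -, H⟩ | ⟨i, j, -, H⟩) <;>
    rcases H with ⟨rfl, rfl, -⟩ | ⟨rfl, rfl, -⟩ | ⟨rfl, rfl, -⟩ | ⟨rfl, rfl, -⟩ <;> simp

lemma hGadget_adj_a_iff {i : ZMod M} (hx : x i ≤ 1) (hy : y i ≤ 1) {w : Fin 5 × ZMod M} :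
    (hGadget h M x y).Adj (0, i) w ↔
      (∃ j < hGadgetSplit h (x i), (1, i + (j : ZMod M)) = w) ∨
        ∃ j < hGadgetSplit h (y i), (2, i + (j : ZMod M)) = w := by
  rw [hGadget_adj_iff]
  constructor
  · rintro (⟨i, j, -, H⟩ | ⟨i, j, -, H⟩) <;>
      simp only [Prod.mk.injEq, Fin.reduceEq, zero_ne_one, true_and, false_and,
        and_false, or_false, false_or, or_self] at H
    rcases H with ⟨rfl, rfl, hj⟩ | ⟨rfl, rfl, hj⟩
    · exact Or.inl ⟨j, (lt_hGadgetSplit_iff hx).2 hj, rfl⟩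
    · exact Or.inr ⟨j, (lt_hGadgetSplit_iff hy).2 hj, rfl⟩
  · rintro (⟨j, hj, rfl⟩ | ⟨j, hj, rfl⟩)
    · exact Or.inl ⟨i, j, hj.trans_le hGadgetSplit_le,
        Or.inl ⟨rfl, rfl, (lt_hGadgetSplit_iff hx).1 hj⟩⟩
    · exact Or.inl ⟨i, j, hj.trans_le hGadgetSplit_le,
        Or.inr (Or.inr (Or.inl ⟨rfl, rfl, (lt_hGadgetSplit_iff hy).1 hj⟩))⟩

lemma hGadget_adj_b_iff (hx : ∀ i, x i ≤ 1) {k : ZMod M} {w : Fin 5 × ZMod M} :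
    (hGadget h M x y).Adj (1, k) w ↔
      ∃ j < h, (if j < hGadgetSplit h (x (k - j)) then 0 else 3, k - (j : ZMod M)) = w := by
  rw [hGadget_adj_iff]
  constructor
  · rintro (⟨i, j, _, H⟩ | ⟨i, j, hj, H⟩) <;>
      simp only [Prod.mk.injEq, Fin.reduceEq, one_ne_zero, true_and, false_and,
        and_false, or_false, or_self] at H
    refine ⟨j, hj, ?_⟩
    rcases H with ⟨rfl, rfl, hsplit⟩ | ⟨rfl, rfl, hsplit⟩
    · rw [add_sub_cancel_right, if_pos ((lt_hGadgetSplit_iff (hx i)).2 hsplit)]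
    · rw [add_sub_cancel_right, if_neg ((hGadgetSplit_le_iff (hx i)).2 hsplit).not_gt]
  · rintro ⟨j, hj, rfl⟩
    have hk : ((1 : Fin 5), k) = (1, k - (j : ZMod M) + j) := by rw [sub_add_cancel]
    refine Or.inr ⟨k - j, j, hj, ?_⟩
    split_ifs with hsplit
    · exact Or.inl ⟨rfl, hk, (lt_hGadgetSplit_iff (hx _)).1 hsplit⟩
    · exact Or.inr (Or.inl ⟨rfl, hk, (hGadgetSplit_le_iff (hx _)).1 (not_lt.1 hsplit)⟩)

lemma hGadget_adj_d_iff {i : ZMod M} (hx : x i ≤ 1) {w : Fin 5 × ZMod M} :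
    (hGadget h M x y).Adj (3, i) w ↔
      ∃ j, (hGadgetSplit h (x i) ≤ j ∧ j < h) ∧ (1, i + (j : ZMod M)) = w := by
  rw [hGadget_adj_iff]
  constructor
  · rintro (⟨i, j, hj, H⟩ | ⟨i, j, _, H⟩) <;>
      simp only [Prod.mk.injEq, Fin.reduceEq, true_and, false_and, and_false, or_false,
        false_or, or_self] at H
    obtain ⟨rfl, rfl, hsplit⟩ := H
    exact ⟨j, ⟨(hGadgetSplit_le_iff hx).2 hsplit, hj⟩, rfl⟩
  · rintro ⟨j, ⟨hsplit, hj⟩, rfl⟩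
    exact Or.inl ⟨i, j, hj, Or.inr (Or.inl ⟨rfl, rfl, (hGadgetSplit_le_iff hx).1 hsplit⟩)⟩

/-- The vertex permutation exchanging `bᵢ` with `cᵢ` and `dᵢ` with `eᵢ`. -/
def hGadgetSwap (M : ℕ) : Equiv.Perm (Fin 5 × ZMod M) :=
  Equiv.prodCongr (Equiv.swap (1 : Fin 5) 2 * Equiv.swap 3 4) (Equiv.refl (ZMod M))

lemma hGadgetSwap_hGadgetSwap (u : Fin 5 × ZMod M) : hGadgetSwap M (hGadgetSwap M u) = u := by
  obtain ⟨a, i⟩ := u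
  fin_cases a <;> rfl

lemma hGadgetRel.swap {u w : Fin 5 × ZMod M} (huw : hGadgetRel h M x y u w) :
    hGadgetRel h M y x (hGadgetSwap M u) (hGadgetSwap M w) := by
  obtain ⟨i, j, hj, ⟨rfl, rfl, H⟩ | ⟨rfl, rfl, H⟩ | ⟨rfl, rfl, H⟩ | ⟨rfl, rfl, H⟩⟩ := huw
  · exact ⟨i, j, hj, Or.inr (Or.inr (Or.inl ⟨rfl, rfl, H⟩))⟩
  · exact ⟨i, j, hj, Or.inr (Or.inr (Or.inr ⟨rfl, rfl, H⟩))⟩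
  · exact ⟨i, j, hj, Or.inl ⟨rfl, rfl, H⟩⟩
  · exact ⟨i, j, hj, Or.inr (Or.inl ⟨rfl, rfl, H⟩)⟩

lemma hGadgetRel_swap_iff {u w : Fin 5 × ZMod M} :
    hGadgetRel h M y x (hGadgetSwap M u) (hGadgetSwap M w) ↔ hGadgetRel h M x y u w :=
  ⟨fun huw => by simpa only [hGadgetSwap_hGadgetSwap] using huw.swap, hGadgetRel.swap⟩

/-- The symmetry of the construction: exchanging the two inputs exchanges the roles of `B, D`
and `C, E`. -/
def hGadgetSwapIso (h M : ℕ) (x y : ZMod M → ℕ) : hGadget h M x y ≃g hGadget h M y x where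
  toEquiv := hGadgetSwap M
  map_rel_iff' := by
    simp only [hGadget_adj_iff, hGadgetRel_swap_iff, implies_true]

end Adjacency

section Degree

variable {h M : ℕ} [NeZero M] {x y : ZMod M → ℕ}

lemma hGadget_degree_a (hM : h ≤ M) {i : ZMod M} (hx : x i ≤ 1) (hy : y i ≤ 1) :
    (hGadget h M x y).degree (0, i) = hGadgetSplit h (x i) + hGadgetSplit h (y i) := by
  have hinj (n : ℕ) :
      Set.InjOn (fun j : ℕ => i + (j : ZMod M)) (Finset.range (hGadgetSplit h n)) :=
    injOn_add_natCast i fun j hj => (Finset.mem_range.1 hj).trans_le (hGadgetSplit_le.trans hM)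
  rw [degree_eq_card_of_injOn (s := (Finset.range (hGadgetSplit h (x i))).disjSum
    (Finset.range (hGadgetSplit h (y i))))
    (f := Sum.elim (fun j : ℕ => (1, i + (j : ZMod M))) fun j : ℕ => (2, i + (j : ZMod M))),
    Finset.card_disjSum, Finset.card_range, Finset.card_range]
  · rintro (j | j) hj (k | k) hk hjk
    · exact congrArg Sum.inl (hinj (x i) (Finset.inl_mem_disjSum.1 hj)
        (Finset.inl_mem_disjSum.1 hk) (congrArg Prod.snd hjk))
    · cases congrArg Prod.fst hjk
    · cases congrArg Prod.fst hjk
    · exact congrArg Sum.inr (hinj (y i) (Finset.inr_mem_disjSum.1 hj)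
        (Finset.inr_mem_disjSum.1 hk) (congrArg Prod.snd hjk))
  · simp only [hGadget_adj_a_iff hx hy, Sum.exists, Finset.inl_mem_disjSum,
      Finset.inr_mem_disjSum, Finset.mem_range, Sum.elim_inl, Sum.elim_inr, implies_true]

lemma hGadget_degree_b (hM : h ≤ M) (hx : ∀ i, x i ≤ 1) (k : ZMod M) :
    (hGadget h M x y).degree (1, k) = h := by
  have hinj : Set.InjOn (fun j : ℕ => k - (j : ZMod M)) (Finset.range h) :=
    injOn_sub_natCast k fun j hj => (Finset.mem_range.1 hj).trans_le hM
  rw [degree_eq_card_of_injOn (s := Finset.range h) (f := fun j : ℕ =>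
    (if j < hGadgetSplit h (x (k - j)) then 0 else 3, k - (j : ZMod M))), Finset.card_range]
  · exact fun j hj l hl hjl => hinj hj hl (congrArg Prod.snd hjl)
  · simp only [hGadget_adj_b_iff hx, Finset.mem_range, implies_true]

lemma hGadget_degree_d (hM : h ≤ M) {i : ZMod M} (hx : x i ≤ 1) :
    (hGadget h M x y).degree (3, i) = h - hGadgetSplit h (x i) := by
  have hinj : Set.InjOn (fun j : ℕ => i + (j : ZMod M))
      (Finset.Ico (hGadgetSplit h (x i)) h) :=
    injOn_add_natCast i fun j hj => (Finset.mem_Ico.1 hj).2.trans_le hM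
  rw [degree_eq_card_of_injOn (s := Finset.Ico (hGadgetSplit h (x i)) h)
    (f := fun j : ℕ => (1, i + (j : ZMod M))), Nat.card_Ico]
  · exact fun j hj l hl hjl => hinj hj hl (congrArg Prod.snd hjl)
  · simp only [hGadget_adj_d_iff hx, Finset.mem_Ico, implies_true]

lemma hGadget_degree_c (hM : h ≤ M) (hy : ∀ i, y i ≤ 1) (k : ZMod M) :
    (hGadget h M x y).degree (2, k) = h :=
  ((hGadgetSwapIso h M x y).degree_eq (2, k)).symm.trans (hGadget_degree_b hM hy k)

lemma hGadget_degree_e (hM : h ≤ M) {i : ZMod M} (hy : y i ≤ 1) :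
    (hGadget h M x y).degree (4, i) = h - hGadgetSplit h (y i) :=
  ((hGadgetSwapIso h M x y).degree_eq (4, i)).symm.trans (hGadget_degree_d hM hy)

lemma le_hGadget_degree_iff (hM : h ≤ M) (hx : ∀ i, x i ≤ 1) (hy : ∀ i, y i ≤ 1) {d : ℕ}
    (hd : h < d) (v : Fin 5 × ZMod M) : d ≤ (hGadget h M x y).degree v ↔
      d ≤ 2 * (3 * h / 4) ∧ v.1 = 0 ∧ x v.2 * y v.2 = 1 := by
  obtain ⟨a, i⟩ := v
  fin_cases a
  · simpa [hGadget_degree_a hM (hx i) (hy i)] using le_hGadgetSplit_add_iff (hx i) (hy i) hd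
  · simpa [hGadget_degree_b hM hx] using hd
  · simpa [hGadget_degree_c hM hy] using hd
  · simpa [hGadget_degree_d hM (hx i)] using (Nat.sub_le _ _).trans_lt hd
  · simpa [hGadget_degree_e hM (hy i)] using (Nat.sub_le _ _).trans_lt hd

lemma ccdh_hGadget (hM : h ≤ M) (hx : ∀ i, x i ≤ 1) (hy : ∀ i, y i ≤ 1) {d : ℕ} (hd : h < d) :
    ccdh (hGadget h M x y) d = if d ≤ 2 * (3 * h / 4) then ∑ i, x i * y i else 0 := by
  simp only [ccdh, le_hGadget_degree_iff hM hx hy hd]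
  split_ifs with hle
  · have himage : {v : Fin 5 × ZMod M | d ≤ 2 * (3 * h / 4) ∧ v.1 = 0 ∧ x v.2 * y v.2 = 1} =
        Prod.mk 0 '' {i | x i * y i = 1} := by
      ext ⟨a, i⟩
      simp [hle, and_comm, eq_comm]
    rw [himage, Set.ncard_image_of_injective _ (Prod.mk_right_injective 0),
      ncard_setOf_eq_one_eq_sum fun i => Nat.mul_le_mul (hx i) (hy i)]
  · simp [hle]

lemma le_ccdh_hGadget (hM : h ≤ M) (hx : ∀ i, x i ≤ 1) :
    h ≤ ccdh (hGadget h M x y) h := by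
  have hsub : Set.range (Prod.mk (1 : Fin 5)) ⊆ {v | h ≤ (hGadget h M x y).degree v} := by
    rintro _ ⟨k, rfl⟩
    exact (hGadget_degree_b hM hx k).ge
  calc
    h ≤ M := hM
    _ = (Set.range (Prod.mk (1 : Fin 5) : ZMod M → _)).ncard := by
      rw [Set.ncard_range_of_injective (Prod.mk_right_injective _), Nat.card_zmod]
    _ ≤ ccdh (hGadget h M x y) h := Set.ncard_le_ncard hsub

end Degree

theorem hGadget_hIndex_and_ccdh_general (h M : ℕ) [NeZero M] (hM : h ≤ M) (x y : ZMod M → ℕ)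
    (hx : ∀ i, x i ≤ 1) (hy : ∀ i, y i ≤ 1) :
    hIndex (hGadget h M x y) = max h (min (2 * (3 * h / 4)) (∑ i, x i * y i)) ∧
    ∀ d, h < d → ccdh (hGadget h M x y) d =
      if d ≤ 2 * (3 * h / 4) then ∑ i, x i * y i else 0 := by
  refine ⟨le_antisymm (hIndex_le fun d hd => ?_) (max_le (le_hIndex (le_ccdh_hGadget hM hx)) ?_),
    fun d => ccdh_hGadget hM hx hy⟩
  · obtain ⟨hhd, hlt⟩ := max_lt_iff.1 hd
    rw [ccdh_hGadget hM hx hy hhd]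
    split_ifs <;> omega
  · rcases le_or_gt (min (2 * (3 * h / 4)) (∑ i, x i * y i)) h with hle | hlt
    · exact hle.trans (le_hIndex (le_ccdh_hGadget hM hx))
    · refine le_hIndex ?_
      rw [ccdh_hGadget hM hx hy hlt, if_pos (min_le_left _ _)]
      exact min_le_right _ _

/-- **h-index and ccdh of the h-index-sensitive gadget graph.** Under the disjointness
promise `∑ᵢ xᵢyᵢ ≤ 1`, the h-index of `H_{x,y}` equals exactly `h` and the ccdh
satisfies `C(3h/2) = ∑ᵢ xᵢyᵢ`; in particular `C(3h/2) = 0` if the supports of `x` and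
`y` are disjoint and `C(3h/2) = 1` if they intersect in exactly one index. -/
theorem hGadget_hIndex_and_ccdh (h M : ℕ) [NeZero M] (hh : 4 ≤ h) (h4 : 4 ∣ h)
    (hM : h ≤ M) (x y : ZMod M → ℕ) (hx : ∀ i, x i ≤ 1) (hy : ∀ i, y i ≤ 1)
    (hpromise : (∑ i : ZMod M, x i * y i) ≤ 1) :
    hIndex (hGadget h M x y) = h ∧
    ccdh (hGadget h M x y) (3 * h / 2) = ∑ i : ZMod M, x i * y i ∧
    ((∑ i : ZMod M, x i * y i) = 0 → ccdh (hGadget h M x y) (3 * h / 2) = 0) ∧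
    ((∑ i : ZMod M, x i * y i) = 1 → ccdh (hGadget h M x y) (3 * h / 2) = 1) := by
  obtain ⟨hIdx, hTail⟩ := hGadget_hIndex_and_ccdh_general h M hM x y hx hy
  have hC := (hTail (3 * h / 2) (by omega)).trans (if_pos (by omega))
  exact ⟨by omega, hC, hC.trans, hC.trans⟩
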